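/- arXiv:2310.10212 — 3 statements merged into one kernel-verified Lean document; each statement's English description precedes it below -/
import Mathlib

section
/- Let φ: ℙⁿ → ℙⁿ⁺¹ be the embedding sending (a₀ : … : aₙ) to (a₀ : … : aₙ : 0), let P ∈ ℙⁿ with defining homogeneous prime ideal ℘ ⊂ K[X₀,…,Xₙ], let 𝔮 ⊂ K[X₀,…,Xₙ₊₁] be the defining homogeneous prime ideal of φ(P), and let r be a positive integer. Then ℘ʳ = 𝔮ʳ ∩ K[X₀,…,Xₙ], where K[X₀,…,Xₙ] is viewed as a subring of K[X₀,…,Xₙ₊₁]. -/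
open MvPolynomial

/-- The defining homogeneous prime ideal in `K[X₀,…,X_{N-1}]` of the point of projective
space with homogeneous coordinate vector `a : Fin N → K`: it is generated by the linear
forms vanishing at `a`. -/
noncomputable def pointIdeal {K : Type} [Field K] {N : ℕ} (a : Fin N → K) :
    Ideal (MvPolynomial (Fin N) K) :=
  Ideal.span {l : MvPolynomial (Fin N) K |
    MvPolynomial.IsHomogeneous l 1 ∧ MvPolynomial.eval a l = 0}

/-- Homogeneous coordinates of the image of the point `a ∈ ℙⁿ` under the embedding
`φ_{n,m} : ℙⁿ → ℙᵐ`, `(a₀ : ⋯ : aₙ) ↦ (a₀ : ⋯ : aₙ : 0 : ⋯ : 0)`. -/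
def extendPoint {K : Type} [Field K] {n : ℕ} (m : ℕ) (a : Fin (n + 1) → K) :
    Fin (m + 1) → K :=
  fun i => if h : (i : ℕ) < n + 1 then a ⟨i, h⟩ else 0

/-- The substitution `X_{n+1} = ⋯ = X_m = 0`, as a `K`-algebra map
`K[X₀,…,X_m] → K[X₀,…,X_n]`. -/
noncomputable def setTailZero (K : Type) [Field K] (n m : ℕ) :
    MvPolynomial (Fin (m + 1)) K →ₐ[K] MvPolynomial (Fin (n + 1)) K :=
  MvPolynomial.aeval fun i : Fin (m + 1) =>
    if h : (i : ℕ) < n + 1 then MvPolynomial.X (⟨i, h⟩ : Fin (n + 1)) else 0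

/-- The inclusion `K[X₀,…,X_n] ⊆ K[X₀,…,X_m]` (as a ring map). -/
noncomputable def polyIncl (K : Type) [Field K] {n m : ℕ} (h : n ≤ m) :
    MvPolynomial (Fin (n + 1)) K →ₐ[K] MvPolynomial (Fin (m + 1)) K :=
  MvPolynomial.rename (Fin.castLE (Nat.succ_le_succ h))

/-- The degree-`t` homogeneous part `[I]_t` of an ideal, as a `K`-subspace. -/
noncomputable def degPart {K : Type} [Field K] {N : ℕ}
    (I : Ideal (MvPolynomial (Fin N) K)) (t : ℕ) :
    Submodule K (MvPolynomial (Fin N) K) :=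
  Submodule.restrictScalars K I ⊓ MvPolynomial.homogeneousSubmodule (Fin N) K t

/-- The Hilbert function `H_{R/I}(t) = dim_K (R/I)_t` of the quotient by a homogeneous
ideal `I`, computed as the dimension of the image of the degree-`t` part of `R` in `R/I`. -/
noncomputable def hilb {K : Type} [Field K] {N : ℕ}
    (I : Ideal (MvPolynomial (Fin N) K)) (t : ℕ) : ℕ :=
  Module.finrank K ((MvPolynomial.homogeneousSubmodule (Fin N) K t).map
    (Ideal.Quotient.mkₐ K I).toLinearMap)

/-- The regularity index of `R/I`: the least `t` from which the Hilbert function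
`H_{R/I}` is constant. -/
noncomputable def regIndex {K : Type} [Field K] {N : ℕ}
    (I : Ideal (MvPolynomial (Fin N) K)) : ℕ :=
  sInf {t : ℕ | ∀ t', t ≤ t' → hilb I t' = hilb I t}

/-!
The inclusion `ι` of polynomial rings has the left inverse `π` setting the additional variables to
zero. Both maps send variables to linear forms or zero, so they carry linear forms to linear forms,
and they are compatible with evaluation at `a` and at `φ(a)`. Hence `ι` maps `℘` into `𝔮` and `π`
maps `𝔮` into `℘`. Both inclusions pass to `r`-th powers, and if `ι f ∈ 𝔮 ^ r`, then
`f = π (ι f) ∈ ℘ ^ r`.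
-/

theorem pow_eq_comap_pow_of_leftInverse {R S F G : Type*} [CommSemiring R] [CommSemiring S]
    [FunLike F R S] [RingHomClass F R S] [FunLike G S R] [RingHomClass G S R] {f : F} {g : G}
    (hgf : Function.LeftInverse g f) {I : Ideal R} {J : Ideal S} (hIJ : I.map f ≤ J)
    (hJI : J.map g ≤ I) (r : ℕ) : I ^ r = (J ^ r).comap f := by
  apply le_antisymm
  · rw [← Ideal.map_le_iff_le_comap, Ideal.map_pow]
    exact Ideal.pow_right_mono hIJ r
  · calc (J ^ r).comap f ≤ (J ^ r).map g := Ideal.comap_le_map_of_inverse f g (J ^ r) hgf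
      _ = J.map g ^ r := Ideal.map_pow g J r
      _ ≤ I ^ r := Ideal.pow_right_mono hJI r

theorem eval_algHom_apply {K σ τ : Type*} [CommSemiring K]
    (φ : MvPolynomial σ K →ₐ[K] MvPolynomial τ K) (a : τ → K) (p : MvPolynomial σ K) :
    eval a (φ p) = eval (fun i => eval a (φ (X i))) p := by
  have h : (aeval a).comp φ = aeval (R := K) fun i => aeval a (φ (X i)) := by
    ext i
    simp
  simpa only [aeval_eq_eval, AlgHom.comp_apply, RingHom.coe_coe] using DFunLike.congr_fun h p

theorem isHomogeneous_algHom_apply {K σ τ : Type*} [CommSemiring K]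
    {φ : MvPolynomial σ K →ₐ[K] MvPolynomial τ K} {d : ℕ}
    (hφ : ∀ i, (φ (X i)).IsHomogeneous d) {p : MvPolynomial σ K} {m : ℕ}
    (hp : p.IsHomogeneous m) : (φ p).IsHomogeneous (d * m) := by
  rw [aeval_unique φ]
  exact hp.aeval _ hφ

theorem isHomogeneous_killCompl_X {K σ τ : Type*} [CommSemiring K] {e : σ → τ}
    (he : Function.Injective e) (j : τ) :
    (killCompl he (X j : MvPolynomial τ K)).IsHomogeneous 1 := by
  rw [killCompl, aeval_X]
  split_ifs
  · exact isHomogeneous_X K _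
  · exact isHomogeneous_zero σ K 1

theorem eval_killCompl_X {K σ τ : Type*} [CommSemiring K] {e : σ → τ}
    (he : Function.Injective e) (a : σ → K) (j : τ) :
    eval a (killCompl he (X j)) = Function.extend e a 0 j := by
  by_cases hj : j ∈ Set.range e
  · obtain ⟨i, rfl⟩ := hj
    rw [← rename_X, killCompl_rename_app, eval_X, he.extend_apply]
  · rw [killCompl, aeval_X, dif_neg hj, map_zero, Function.extend_apply' _ _ _ hj, Pi.zero_apply]

section

variable {K : Type} [Field K]

theorem map_pointIdeal_le {M N : ℕ} {φ : MvPolynomial (Fin M) K →ₐ[K] MvPolynomial (Fin N) K}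
    {a : Fin N → K} {b : Fin M → K} (hφ : ∀ j, (φ (X j)).IsHomogeneous 1)
    (hb : ∀ j, eval a (φ (X j)) = b j) : (pointIdeal b).map φ ≤ pointIdeal a := by
  rw [pointIdeal, Ideal.map_span, Ideal.span_le]
  rintro _ ⟨l, ⟨hl, hlb⟩, rfl⟩
  refine Ideal.subset_span ⟨isHomogeneous_algHom_apply hφ hl, ?_⟩
  rwa [eval_algHom_apply, funext hb]

theorem map_rename_pointIdeal_le {N M : ℕ} {e : Fin N → Fin M} (he : Function.Injective e)
    (a : Fin N → K) :
    (pointIdeal a).map (rename e) ≤ pointIdeal (Function.extend e a 0) := by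
  refine map_pointIdeal_le (fun i => ?_) fun i => ?_
  · rw [rename_X]
    exact isHomogeneous_X K (e i)
  · rw [rename_X, eval_X, he.extend_apply]

theorem map_killCompl_pointIdeal_le {N M : ℕ} {e : Fin N → Fin M} (he : Function.Injective e)
    (a : Fin N → K) :
    (pointIdeal (Function.extend e a 0)).map (killCompl he) ≤ pointIdeal a :=
  map_pointIdeal_le (isHomogeneous_killCompl_X he) (eval_killCompl_X he a)

theorem extendPoint_eq_extend {n m : ℕ} (h : n ≤ m) (a : Fin (n + 1) → K) :
    extendPoint m a = Function.extend (Fin.castLE (Nat.succ_le_succ h)) a 0 := by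
  funext j
  by_cases hj : (j : ℕ) < n + 1
  · rw [extendPoint, dif_pos hj]
    exact ((Fin.castLE_injective (Nat.succ_le_succ h)).extend_apply a 0 ⟨j, hj⟩).symm
  · have hrange : ¬∃ i, Fin.castLE (Nat.succ_le_succ h) i = j := by
      rintro ⟨i, rfl⟩
      exact hj i.isLt
    rw [extendPoint, dif_neg hj, Function.extend_apply' _ _ _ hrange, Pi.zero_apply]

theorem stmt1_general {N M : ℕ} {e : Fin N → Fin M} (he : Function.Injective e)
    (a : Fin N → K) (r : ℕ) :
    pointIdeal a ^ r = (pointIdeal (Function.extend e a 0) ^ r).comap (rename e) :=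
  pow_eq_comap_pow_of_leftInverse (killCompl_rename_app he)
    (map_rename_pointIdeal_le he a) (map_killCompl_pointIdeal_le he a) r

end

theorem stmt1 (K : Type) [Field K] [IsAlgClosed K] (n : ℕ)
    (a : Fin (n + 1) → K) (ha : a ≠ 0) (r : ℕ) (hr : 0 < r) :
    pointIdeal a ^ r =
      Ideal.comap (polyIncl K (Nat.le_succ n)) (pointIdeal (extendPoint (n + 1) a) ^ r) := by
  rw [extendPoint_eq_extend (Nat.le_succ n)]
  exact stmt1_general (Fin.castLE_injective _) a r
end

section
/- Let m > n be positive integers, Z = m₁P₁ + ⋯ + mₛPₛ be fat points in ℙⁿ, and φ_{n,m}: ℙⁿ → ℙᵐ be the embedding appending m−n zero coordinates. If 0 ≤ i ≤ t < reg(Rₙ/I_Z), g is a degree-i element of ℘₁^{m₁+i−t} ∩ ⋯ ∩ ℘ₛ^{mₛ+i−t} (with the convention ℘ʳ = Rₙ when r ≤ 0), and h_{t−i} is a degree-(t−i) element of K[Xₙ₊₁,…,Xₘ], then g·h_{t−i} ∈ [I_{φ_{n,m}(Z)}]_t. -/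
open MvPolynomial

theorem aeval_mem_pow_of_isHomogeneous {σ R A : Type*} [CommSemiring R] [CommSemiring A]
    [Algebra R A] {I : Ideal A} {x : σ → A} (hx : ∀ k, x k ∈ I) {d : ℕ} {f : MvPolynomial σ R}
    (hf : f.IsHomogeneous d) : aeval x f ∈ I ^ d := by
  have hspan : Ideal.span (Set.range x) ≤ I := Ideal.span_le.2 (Set.range_subset_iff.2 hx)
  refine Ideal.pow_right_mono hspan d ((Ideal.mem_span_pow_iff_exists_isHomogeneous x _).2 ?_)
  exact ⟨map (algebraMap R A) f, hf.map _, eval_map _ _ _⟩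

section PointIdeal

variable {K : Type} [Field K] {N M : ℕ}

theorem X_mem_pointIdeal {a : Fin N → K} {k : Fin N} (hk : a k = 0) :
    (X k : MvPolynomial (Fin N) K) ∈ pointIdeal a :=
  Ideal.subset_span ⟨isHomogeneous_X K k, (eval_X k).trans hk⟩

theorem mem_pointIdeal_pow_of_mem_supported {a : Fin N → K} {d : ℕ}
    {q : MvPolynomial (Fin N) K} (hq : q ∈ supported K {k | a k = 0}) (hqh : q.IsHomogeneous d) :
    q ∈ pointIdeal a ^ d := by
  rw [supported_eq_range_rename, AlgHom.mem_range] at hq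
  obtain ⟨q', rfl⟩ := hq
  have hqh' : q'.IsHomogeneous d :=
    (IsHomogeneous.rename_isHomogeneous_iff Subtype.val_injective).1 hqh
  rw [rename_eq_aeval]
  exact aeval_mem_pow_of_isHomogeneous (fun k => X_mem_pointIdeal k.2) hqh'

theorem map_rename_pointIdeal_comp_le (f : Fin N → Fin M) (a : Fin M → K) :
    (pointIdeal (a ∘ f)).map (rename f : _ →ₐ[K] _) ≤ pointIdeal a := by
  rw [pointIdeal, Ideal.map_span, Ideal.span_le]
  rintro _ ⟨l, ⟨hl, hl0⟩, rfl⟩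
  exact Ideal.subset_span ⟨hl.rename_isHomogeneous, (eval_rename f a l).trans hl0⟩

theorem rename_mem_pointIdeal_pow {f : Fin N → Fin M} {a : Fin M → K} {r : ℕ}
    {g : MvPolynomial (Fin N) K} (hg : g ∈ pointIdeal (a ∘ f) ^ r) :
    rename f g ∈ pointIdeal a ^ r := by
  have hmap := Ideal.mem_map_of_mem (rename f : _ →ₐ[K] _) hg
  rw [Ideal.map_pow] at hmap
  exact Ideal.pow_right_mono (map_rename_pointIdeal_comp_le f a) r hmap

end PointIdeal

section ExtendPoint

variable {K : Type} [Field K] {n m : ℕ}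

theorem extendPoint_comp_castLE (h : n ≤ m) (a : Fin (n + 1) → K) :
    extendPoint m a ∘ Fin.castLE (Nat.succ_le_succ h) = a :=
  funext fun k => dif_pos k.isLt

theorem extendPoint_apply_of_le (a : Fin (n + 1) → K) {k : Fin (m + 1)} (hk : n + 1 ≤ (k : ℕ)) :
    extendPoint m a k = 0 :=
  dif_neg hk.not_gt

theorem polyIncl_mem_pointIdeal_pow (h : n ≤ m) {a : Fin (n + 1) → K} {r : ℕ}
    {g : MvPolynomial (Fin (n + 1)) K} (hg : g ∈ pointIdeal a ^ r) :
    polyIncl K h g ∈ pointIdeal (extendPoint m a) ^ r := by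
  rw [← extendPoint_comp_castLE h a] at hg
  exact rename_mem_pointIdeal_pow hg

theorem isHomogeneous_polyIncl (h : n ≤ m) {d : ℕ} {g : MvPolynomial (Fin (n + 1)) K}
    (hg : g.IsHomogeneous d) : (polyIncl K h g).IsHomogeneous d :=
  hg.rename_isHomogeneous

theorem mem_pointIdeal_extendPoint_pow (a : Fin (n + 1) → K) {d : ℕ}
    {q : MvPolynomial (Fin (m + 1)) K}
    (hq : q ∈ supported K {k : Fin (m + 1) | n + 1 ≤ (k : ℕ)}) (hqh : q.IsHomogeneous d) :
    q ∈ pointIdeal (extendPoint m a) ^ d :=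
  mem_pointIdeal_pow_of_mem_supported
    (supported_mono (fun _ hk => extendPoint_apply_of_le a hk) hq) hqh

end ExtendPoint

theorem stmt13_general {K : Type} [Field K] {n m : ℕ} (hnm : n ≤ m) {ι : Type*}
    (p : ι → Fin (n + 1) → K) (mu : ι → ℕ) {i t : ℕ} (hit : i ≤ t)
    {g : MvPolynomial (Fin (n + 1)) K}
    (hg : g ∈ ⨅ j, pointIdeal (p j) ^ (mu j + i - t)) (hgh : g.IsHomogeneous i)
    {q : MvPolynomial (Fin (m + 1)) K}
    (hq : q ∈ supported K {k : Fin (m + 1) | n + 1 ≤ (k : ℕ)})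
    (hqh : q.IsHomogeneous (t - i)) :
    polyIncl K hnm g * q ∈ degPart (⨅ j, pointIdeal (extendPoint m (p j)) ^ mu j) t := by
  have hmem : polyIncl K hnm g * q ∈ ⨅ j, pointIdeal (extendPoint m (p j)) ^ mu j := by
    rw [Ideal.mem_iInf] at hg ⊢
    intro j
    have hmul := Ideal.mul_mem_mul (polyIncl_mem_pointIdeal_pow hnm (hg j))
      (mem_pointIdeal_extendPoint_pow (p j) hq hqh)
    rw [← pow_add] at hmul
    -- Strict when `mu j + i < t`: truncated subtraction encodes `℘ʳ = R` for `r ≤ 0`.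
    have hexp : mu j ≤ mu j + i - t + (t - i) := by lia
    exact Ideal.pow_le_pow_right hexp hmul
  have hdeg : (polyIncl K hnm g * q).IsHomogeneous t := by
    simpa only [Nat.add_sub_cancel' hit] using (isHomogeneous_polyIncl hnm hgh).mul hqh
  exact ⟨hmem, hdeg⟩

theorem stmt13 (K : Type) [Field K] [IsAlgClosed K] (n m s : ℕ) (hnm : n < m) (hs : 0 < s)
    (p : Fin s → Fin (n + 1) → K) (hp : ∀ i, p i ≠ 0)
    (hdist : ∀ i j : Fin s, i ≠ j → ∀ c : K, p i ≠ c • p j)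
    (mu : Fin s → ℕ) (hmu : ∀ i, 0 < mu i)
    (i t : ℕ) (hit : i ≤ t) (ht : t < regIndex (⨅ j, pointIdeal (p j) ^ mu j))
    (g : MvPolynomial (Fin (n + 1)) K)
    (hg : g ∈ ⨅ j, pointIdeal (p j) ^ (mu j + i - t)) (hgh : g.IsHomogeneous i)
    (q : MvPolynomial (Fin (m + 1)) K)
    (hq : q ∈ MvPolynomial.supported K {k : Fin (m + 1) | n + 1 ≤ (k : ℕ)})
    (hqh : q.IsHomogeneous (t - i)) :
    polyIncl K hnm.le g * q ∈ degPart (⨅ j, pointIdeal (extendPoint m (p j)) ^ mu j) t :=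
  stmt13_general hnm.le p mu hit hg hgh hq hqh
end

section
/- Let m > n be positive integers, Z = m₁P₁ + ⋯ + mₛPₛ be fat points in ℙⁿ, and φ_{n,m}: ℙⁿ → ℙᵐ be the embedding appending m−n zero coordinates. If there exists an index j with m_j ≥ 2, then for every t ≥ 1, H_{Rₘ/I_{φ_{n,m}(Z)}}(t) > H_{Rₙ/I_Z}(t). -/
open MvPolynomial

/-! Setting `X_{n+1} = ⋯ = X_m = 0` induces a surjection from the degree-`t` part of
`R_m / I_{φ(Z)}` onto that of `R_n / I_Z`. It kills the class of `X_k ^ (t - 1) * X_m`, where `X_k`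
does not vanish at `P_j`. This class is nonzero: an element of `𝔮_j ^ 2` has all its partial
derivatives in `𝔮_j`, whereas the derivative `X_k ^ (t - 1)` with respect to `X_m` does not vanish
at `φ(P_j)`. -/

theorem finrank_map_lt_of_mem_ker {K V W : Type*} [DivisionRing K] [AddCommGroup V] [Module K V]
    [AddCommGroup W] [Module K W] (f : V →ₗ[K] W) {S : Submodule K V} [FiniteDimensional K S]
    {x : V} (hxS : x ∈ S) (hx : x ≠ 0) (hfx : f x = 0) :
    Module.finrank K (S.map f) < Module.finrank K S := by
  have hker : (f.domRestrict S).ker ≠ ⊥ :=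
    (Submodule.ne_bot_iff _).2 ⟨⟨x, hxS⟩, hfx, fun h => hx (congrArg Subtype.val h)⟩
  have hrank := (f.domRestrict S).finrank_range_add_finrank_ker
  rw [LinearMap.range_domRestrict] at hrank
  have hpos := Submodule.one_le_finrank_iff.2 hker
  lia

theorem derivation_apply_mem_pow_of_mem_pow_succ {R A : Type*} [CommSemiring R] [CommSemiring A]
    [Algebra R A] (D : Derivation R A A) {I : Ideal A} {x : A} {k : ℕ} (hx : x ∈ I ^ (k + 1)) :
    D x ∈ I ^ k := by
  induction k generalizing x with
  | zero => simp
  | succ k ih =>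
    rw [pow_succ] at hx
    refine Submodule.mul_induction_on hx (fun y hy z hz => ?_) fun y z hy hz => ?_
    · have hzy : z * D y ∈ I ^ (k + 1) := by
        rw [pow_succ']
        exact Ideal.mul_mem_mul hz (ih hy)
      rw [D.leibniz]
      exact add_mem (Ideal.mul_mem_right _ _ hy) hzy
    · rw [map_add]
      exact add_mem hy hz

section PointIdeal

variable {K : Type} [Field K] {N : ℕ} {a : Fin N → K}

theorem eval_eq_zero_of_mem_pointIdeal {f : MvPolynomial (Fin N) K} (hf : f ∈ pointIdeal a) :
    eval a f = 0 := by
  have hle : pointIdeal a ≤ RingHom.ker (eval a) := Ideal.span_le.2 fun _ hl => hl.2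
  exact hle hf

theorem X_pow_mul_X_notMem_pointIdeal_sq {k l : Fin N} (hkl : k ≠ l) (hk : a k ≠ 0) (d : ℕ) :
    X k ^ d * X l ∉ pointIdeal a ^ 2 := by
  intro hmem
  have hpderiv : pderiv l (X k ^ d * X l : MvPolynomial (Fin N) K) = X k ^ d := by
    simp [Derivation.leibniz_pow, pderiv_X_of_ne hkl]
  have hX : (X k : MvPolynomial (Fin N) K) ^ d ∈ pointIdeal a := by
    simpa only [hpderiv, pow_one] using derivation_apply_mem_pow_of_mem_pow_succ (pderiv l) hmem
  exact pow_ne_zero d hk (by simpa using eval_eq_zero_of_mem_pointIdeal hX)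

end PointIdeal

section SetTailZero

variable {K : Type} [Field K] {n m : ℕ}

theorem setTailZero_X_of_lt {i : Fin (m + 1)} (hi : n < i) : setTailZero K n m (X i) = 0 := by
  simp [setTailZero, not_le.2 hi]

theorem setTailZero_polyIncl (h : n ≤ m) (f : MvPolynomial (Fin (n + 1)) K) :
    setTailZero K n m (polyIncl K h f) = f := by
  have hcomp : (setTailZero K n m).comp (polyIncl K h) = AlgHom.id K _ := by
    ext i : 1
    simp [setTailZero, polyIncl, i.is_le]
  exact DFunLike.congr_fun hcomp f

theorem isHomogeneous_setTailZero {f : MvPolynomial (Fin (m + 1)) K} {t : ℕ}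
    (hf : f.IsHomogeneous t) : (setTailZero K n m f).IsHomogeneous t := by
  rw [← one_mul t]
  refine hf.aeval _ fun i => ?_
  split_ifs
  exacts [isHomogeneous_X K _, isHomogeneous_zero _ K 1]

theorem map_setTailZero_homogeneousSubmodule (h : n ≤ m) (t : ℕ) :
    (homogeneousSubmodule (Fin (m + 1)) K t).map (setTailZero K n m).toLinearMap =
      homogeneousSubmodule (Fin (n + 1)) K t :=
  le_antisymm (Submodule.map_le_iff_le_comap.2 fun _ => isHomogeneous_setTailZero)
    fun f hf => ⟨polyIncl K h f, hf.rename_isHomogeneous, setTailZero_polyIncl h f⟩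

theorem eval_setTailZero (a : Fin (n + 1) → K) (f : MvPolynomial (Fin (m + 1)) K) :
    eval a (setTailZero K n m f) = eval (extendPoint m a) f := by
  have hcomp : (aeval a).comp (setTailZero K n m) = aeval (extendPoint m a) := by
    ext i
    simp only [setTailZero, extendPoint, AlgHom.comp_apply, aeval_X]
    split_ifs <;> simp
  simpa using DFunLike.congr_fun hcomp f

theorem pointIdeal_extendPoint_le_comap (a : Fin (n + 1) → K) :
    pointIdeal (extendPoint m a) ≤ (pointIdeal a).comap (setTailZero K n m) :=
  Ideal.span_le.2 fun l ⟨hlin, hzero⟩ =>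
    Ideal.subset_span ⟨isHomogeneous_setTailZero hlin, (eval_setTailZero a l).trans hzero⟩

theorem iInf_pointIdeal_extendPoint_pow_le_comap {ι : Sort*} (p : ι → Fin (n + 1) → K)
    (mu : ι → ℕ) :
    ⨅ i, pointIdeal (extendPoint m (p i)) ^ mu i ≤
      (⨅ i, pointIdeal (p i) ^ mu i).comap (setTailZero K n m) := by
  rw [Ideal.comap_iInf]
  exact iInf_mono fun i => (Ideal.pow_right_mono (pointIdeal_extendPoint_le_comap (p i)) _).trans
    (Ideal.le_comap_pow _ _)

theorem extendPoint_castLE (h : n + 1 ≤ m + 1) (a : Fin (n + 1) → K) (k : Fin (n + 1)) :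
    extendPoint m a (k.castLE h) = a k :=
  dif_pos k.is_lt

end SetTailZero

theorem hilb_lt_hilb_of_map_eq {K : Type} [Field K] {M N t : ℕ}
    (π : MvPolynomial (Fin M) K →ₐ[K] MvPolynomial (Fin N) K)
    (hπ : (homogeneousSubmodule (Fin M) K t).map π.toLinearMap = homogeneousSubmodule (Fin N) K t)
    {I : Ideal (MvPolynomial (Fin N) K)} {J : Ideal (MvPolynomial (Fin M) K)} (hJI : J ≤ I.comap π)
    {f : MvPolynomial (Fin M) K} (hf : f.IsHomogeneous t) (hfI : π f ∈ I) (hfJ : f ∉ J) :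
    hilb I t < hilb J t := by
  have : FiniteDimensional K (homogeneousSubmodule (Fin M) K t) :=
    Module.Finite.iff_fg.2 (homogeneousSubmodule_fg _ K t)
  have himage : (homogeneousSubmodule (Fin N) K t).map (Ideal.Quotient.mkₐ K I).toLinearMap =
      ((homogeneousSubmodule (Fin M) K t).map (Ideal.Quotient.mkₐ K J).toLinearMap).map
        (Ideal.quotientMapₐ I π hJI).toLinearMap := by
    rw [← hπ, ← Submodule.map_comp, ← Submodule.map_comp, ← AlgHom.comp_toLinearMap,
      ← AlgHom.comp_toLinearMap, Ideal.quotient_map_comp_mkₐ]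
  rw [hilb, hilb, himage]
  exact finrank_map_lt_of_mem_ker _ (Submodule.mem_map_of_mem hf)
    (mt Ideal.Quotient.eq_zero_iff_mem.1 hfJ) (Ideal.Quotient.eq_zero_iff_mem.2 hfI)

theorem stmt18_general {K : Type} [Field K] {n m : ℕ} (hnm : n < m) {ι : Sort*}
    (p : ι → Fin (n + 1) → K) (hp : ∀ i, p i ≠ 0) (mu : ι → ℕ) (hj : ∃ j, 2 ≤ mu j) (t : ℕ)
    (ht : 1 ≤ t) :
    hilb (⨅ i, pointIdeal (p i) ^ mu i) t <
      hilb (⨅ i, pointIdeal (extendPoint m (p i)) ^ mu i) t := by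
  obtain ⟨j, hj⟩ := hj
  obtain ⟨k, hk⟩ := Function.ne_iff.1 (hp j)
  have hle : n + 1 ≤ m + 1 := Nat.succ_le_succ hnm.le
  have hk' : extendPoint m (p j) (k.castLE hle) ≠ 0 := by rwa [extendPoint_castLE]
  have hne : k.castLE hle ≠ Fin.last m := Fin.ne_of_lt (k.is_le.trans_lt hnm)
  refine hilb_lt_hilb_of_map_eq (f := X (k.castLE hle) ^ (t - 1) * X (Fin.last m))
    (setTailZero K n m) (map_setTailZero_homogeneousSubmodule hnm.le t)
    (iInf_pointIdeal_extendPoint_pow_le_comap p mu) ?_ ?_ fun hmem => ?_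
  · simpa [Nat.sub_add_cancel ht] using
      (isHomogeneous_X_pow (R := K) (k.castLE hle) (t - 1)).mul (isHomogeneous_X K (Fin.last m))
  · rw [map_mul, setTailZero_X_of_lt hnm, mul_zero]
    exact zero_mem _
  · exact X_pow_mul_X_notMem_pointIdeal_sq hne hk' (t - 1)
      (Ideal.pow_le_pow_right hj (Ideal.mem_iInf.1 hmem j))

theorem stmt18 (K : Type) [Field K] [IsAlgClosed K] (n m s : ℕ) (hnm : n < m) (hs : 0 < s)
    (p : Fin s → Fin (n + 1) → K) (hp : ∀ i, p i ≠ 0)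
    (hdist : ∀ i j : Fin s, i ≠ j → ∀ c : K, p i ≠ c • p j)
    (mu : Fin s → ℕ) (hmu : ∀ i, 0 < mu i)
    (hj : ∃ j, 2 ≤ mu j) :
    ∀ t : ℕ, 1 ≤ t → hilb (⨅ i, pointIdeal (p i) ^ mu i) t <
      hilb (⨅ i, pointIdeal (extendPoint m (p i)) ^ mu i) t := by
  exact stmt18_general hnm p hp mu hj
end
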